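/- Let d be a rational prime, m ≥ 2, n ≥ 1. Suppose the reduction G̅_{d,0,n}(c) ∈ 𝔽_d[c] factors as G̅_{d,0,n} = f_1 ⋯ f_k with f_1, …, f_k ∈ 𝔽_d[c] distinct irreducible polynomials, and let f̃_1, …, f̃_k ∈ ℤ[c] be any lifts. Let c_0 be a root of G_{d,m,n}(c) and K = ℚ(c_0). Then in O_K one has (d) = (d, f̃_1(c_0))^{M_{m,n}} ⋯ (d, f̃_k(c_0))^{M_{m,n}}, where M_{m,n} = d^{m−1}(d−1) if n ∤ m−1 and M_{m,n} = (d^{m−1}−1)(d−1) if n | m−1. -/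

import Mathlib

open Polynomial

noncomputable section

/-- `critPoly d i` is `f_{c,d}^i(0)` as a polynomial in the variable `c` over `ℤ`,
where `f_{c,d}(x) = x^d + c`. -/
def critPoly (d : ℕ) : ℕ → Polynomial ℤ
  | 0 => 0
  | i + 1 => critPoly d i ^ d + X

/-- The field of rational functions in `c` over `ℚ`, realized as the fraction field of `ℤ[c]`. -/
abbrev RF : Type := FractionRing (Polynomial ℤ)

/-- The natural inclusion `ℤ[c] → ℚ(c)`. -/
def toRF (p : Polynomial ℤ) : RF := algebraMap (Polynomial ℤ) RF p

/-- `G_{d,0,n} = ∏_{k ∣ n} (f_{c,d}^k(0))^{μ(n/k)}` as a rational function. -/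
def G0Rat (d n : ℕ) : RF :=
  ∏ k ∈ n.divisors, toRF (critPoly d k) ^ (ArithmeticFunction.moebius (n / k))

/-- `F_{d,m,n}` as a rational function. -/
def FRat (d m n : ℕ) : RF :=
  ∏ k ∈ n.divisors,
    ((toRF (critPoly d (m + k)) - toRF (critPoly d m)) /
      (toRF (critPoly d (m - 1 + k)) - toRF (critPoly d (m - 1)))) ^
      (ArithmeticFunction.moebius (n / k))

/-- `G_{d,m,n}` (for `m ≥ 2`) as a rational function. -/
def GRat (d m n : ℕ) : RF :=
  if n ∣ m - 1 then FRat d m n / FRat d 1 n else FRat d m n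

/-- `G : ℤ[c]` is the Misiurewicz polynomial `G_{d,m,n}` (for `m ≥ 2`). -/
def IsMisiurewicz (d m n : ℕ) (G : Polynomial ℤ) : Prop := toRF G = GRat d m n

/-- `G0 : ℤ[c]` is the polynomial `G_{d,0,n}`. -/
def IsG0 (d n : ℕ) (G0 : Polynomial ℤ) : Prop := toRF G0 = G0Rat d n

/-!
Write `a_i = f_{c,d}^i(0)`, a strong divisibility sequence, and let `c` be a root of `G_{d,m,n}`
in a domain. Evaluating the Möbius product at `c` requires cancelling vanishing factors, and `d`
not being a unit is what makes the quotients harmless: the only gap ratio that survives is the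
one of exact period `n`, so `0` has preperiod `m` and period `n`. Hence `a_i` divides `a_n` for
all `i > 0` and is a unit unless `n ∣ i`, which gives `G_{d,0,n}(c) ~ a_n` up to a unit.

Since `x ↦ x^d` is additive modulo `d`, the gaps satisfy `a_{j+n} - a_j ~ a_n^(d^j)` for
`0 < j < m`. On the other hand `a_{m-1+n}^d = a_{m-1}^d` makes `a_{m-1+n} / a_{m-1}` a primitive
`d`-th root of unity `ζ`, and `(ζ - 1)^(d-1) ~ d`. Comparing the two at `j = m - 1` yields
`G_{d,0,n}(c)^M ~ d`. Finally `∏ (d, f̃_i(c)) = (G_{d,0,n}(c))`: the product of the ideals is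
contained in `(d, ∏ f̃_i(c)) = (G_{d,0,n}(c))`, and equality follows from `G_{d,0,n}(c)^2 ∣ d`
if `M ≥ 2`, and from the irreducibility of `G_{d,0,1} = c` modulo `d` if `n = 1`.
-/

section CriticalOrbit

/-- The map `f_{c,d}(x) = x^d + c`. -/
def unicritical {R : Type*} [CommRing R] (d : ℕ) (c x : R) : R := x ^ d + c

/-- The critical orbit `a_i = f_{c,d}^i(0)`, over an arbitrary ring. -/
def critOrbit {R : Type*} [CommRing R] (d : ℕ) (c : R) (i : ℕ) : R := (unicritical d c)^[i] 0

/-- The difference `a_{j+k} - a_j`, which vanishes iff `a_j` is a periodic point of period `k`. -/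
def orbitGap {R : Type*} [CommRing R] (d : ℕ) (c : R) (j k : ℕ) : R :=
  critOrbit d c (j + k) - critOrbit d c j

/-- The ratio `(a_{j+1+k} - a_{j+1}) / (a_{j+k} - a_j)`, written as a geometric sum so that it
makes sense in every ring. -/
def gapRatio {R : Type*} [CommRing R] (d : ℕ) (c : R) (j k : ℕ) : R :=
  ∑ i ∈ Finset.range d, critOrbit d c (j + k) ^ i * critOrbit d c j ^ (d - 1 - i)

variable {R T F : Type*} [CommRing R] [CommRing T] [FunLike F R T] [RingHomClass F R T]
  (d : ℕ) (c : R)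

@[simp] lemma critOrbit_zero : critOrbit d c 0 = 0 := rfl

lemma critOrbit_succ (i : ℕ) : critOrbit d c (i + 1) = critOrbit d c i ^ d + c :=
  Function.iterate_succ_apply' _ _ _

lemma critPoly_eq_critOrbit (i : ℕ) : critPoly d i = critOrbit d X i := by
  induction i with
  | zero => rfl
  | succ i ih => rw [critPoly, critOrbit_succ, ih]

lemma map_critOrbit (φ : F) (i : ℕ) : φ (critOrbit d c i) = critOrbit d (φ c) i := by
  induction i with
  | zero => exact map_zero φ
  | succ i ih => rw [critOrbit_succ, critOrbit_succ, map_add, map_pow, ih]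

lemma map_orbitGap (φ : F) (j k : ℕ) : φ (orbitGap d c j k) = orbitGap d (φ c) j k := by
  simp only [orbitGap, map_sub, map_critOrbit]

lemma map_gapRatio (φ : F) (j k : ℕ) : φ (gapRatio d c j k) = gapRatio d (φ c) j k := by
  simp only [gapRatio, map_sum, map_mul, map_pow, map_critOrbit]

@[simp] lemma orbitGap_zero_left (k : ℕ) : orbitGap d c 0 k = critOrbit d c k := by
  simp [orbitGap]

lemma orbitGap_eq_zero_iff_isPeriodicPt {j k : ℕ} :
    orbitGap d c j k = 0 ↔ Function.IsPeriodicPt (unicritical d c) k (critOrbit d c j) := by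
  rw [orbitGap, sub_eq_zero, critOrbit, add_comm, Function.iterate_add_apply]
  rfl

lemma critOrbit_mem_iff_isPeriodicPt (I : Ideal R) {i : ℕ} :
    critOrbit d c i ∈ I ↔
      Function.IsPeriodicPt (unicritical d (Ideal.Quotient.mk I c)) i 0 := by
  rw [← Ideal.Quotient.eq_zero_iff_mem, map_critOrbit]
  rfl

lemma critOrbit_dvd_critOrbit {i j : ℕ} (hij : i ∣ j) : critOrbit d c i ∣ critOrbit d c j := by
  rw [← Ideal.mem_span_singleton, critOrbit_mem_iff_isPeriodicPt]
  exact ((critOrbit_mem_iff_isPeriodicPt d c _).1 (Ideal.mem_span_singleton_self _)).trans_dvd hij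

lemma orbitGap_succ (j k : ℕ) : orbitGap d c (j + 1) k = orbitGap d c j k * gapRatio d c j k := by
  rw [orbitGap, orbitGap, gapRatio, mul_comm, geom_sum₂_mul, add_right_comm j 1 k,
    critOrbit_succ, critOrbit_succ, add_sub_add_right_eq_sub]

lemma orbitGap_dvd_orbitGap (k : ℕ) {i j : ℕ} (hij : i ≤ j) :
    orbitGap d c i k ∣ orbitGap d c j k := by
  induction j, hij using Nat.le_induction with
  | base => exact dvd_rfl
  | succ j _ ih => exact orbitGap_succ d c j k ▸ ih.mul_right _

lemma gapRatio_zero_left (hd : d ≠ 0) (k : ℕ) : gapRatio d c 0 k = critOrbit d c k ^ (d - 1) := by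
  rw [gapRatio, Finset.sum_eq_single_of_mem (d - 1) (Finset.mem_range.2 (by omega))]
  · simp
  · intro i hi hne
    have := Finset.mem_range.1 hi
    rw [critOrbit_zero, zero_pow (by omega), mul_zero]

variable {d c}

lemma gapRatio_of_orbitGap_eq_zero {j k : ℕ} (h : orbitGap d c j k = 0) :
    gapRatio d c j k = d * critOrbit d c j ^ (d - 1) := by
  rw [gapRatio, sub_eq_zero.1 h, geom_sum₂_self]

lemma gapRatio_mem (hd : 2 ≤ d) {I : Ideal R} {j k : ℕ} (hjk : critOrbit d c (j + k) ∈ I)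
    (hj : critOrbit d c j ∈ I) : gapRatio d c j k ∈ I := by
  refine I.sum_mem fun i _ => ?_
  obtain rfl | hi := eq_or_ne i 0
  · exact I.mul_mem_left _ (I.pow_mem_of_mem hj _ (by omega))
  · exact I.mul_mem_right _ (I.pow_mem_of_mem hjk _ (by omega))

lemma exists_orbitGap_mul_eq {I : Ideal R} {j k q : ℕ} (hk : 0 < k) (hq : 0 < q)
    (hI : gapRatio d c j k ∈ I) :
    ∃ x ∈ I, orbitGap d c j (q * k) = orbitGap d c j k * (1 + x) := by
  induction q, hq using Nat.le_induction with
  | base => exact ⟨0, I.zero_mem, by simp⟩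
  | succ q hq ih =>
    obtain ⟨x, hx, hgap⟩ := ih
    have hjq : j + 1 ≤ j + q * k := Nat.add_le_add_left (Nat.mul_pos hq hk) j
    obtain ⟨w, hw⟩ := orbitGap_dvd_orbitGap d c k hjq
    refine ⟨x + gapRatio d c j k * w, I.add_mem hx (I.mul_mem_right w hI), ?_⟩
    calc orbitGap d c j ((q + 1) * k) = orbitGap d c j (q * k) + orbitGap d c (j + q * k) k := by
          simp only [orbitGap, add_mul, one_mul, ← add_assoc]; ring
      _ = orbitGap d c j k * (1 + (x + gapRatio d c j k * w)) := by
          rw [hgap, hw, orbitGap_succ]; ring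

lemma exists_critOrbit_mul_eq (hd : 2 ≤ d) {k q : ℕ} (hk : 0 < k) (hq : 0 < q) :
    ∃ w, critOrbit d c (q * k) = critOrbit d c k * (1 + critOrbit d c k * w) := by
  have hI : gapRatio d c 0 k ∈ Ideal.span {critOrbit d c k} := by
    rw [gapRatio_zero_left d c (by omega)]
    exact Ideal.pow_mem_of_mem _ (Ideal.mem_span_singleton_self _) _ (by omega)
  obtain ⟨x, hx, hgap⟩ := exists_orbitGap_mul_eq hk hq hI
  obtain ⟨w, rfl⟩ := Ideal.mem_span_singleton.1 hx
  exact ⟨w, by simpa using hgap⟩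

lemma exists_gapRatio_eq_of_dvd (hd : 2 ≤ d) {l n : ℕ} (hl : 0 < l) (hn : 0 < n) (hnl : n ∣ l) :
    ∃ w, gapRatio d c l n = critOrbit d c n ^ (d - 1) * (d + critOrbit d c n * w) := by
  obtain ⟨q, rfl⟩ := hnl
  have hq : 0 < q := Nat.pos_of_mul_pos_left hl
  set a := critOrbit d c n
  obtain ⟨x, hx⟩ : ∃ x, critOrbit d c (n * q + n) = a * (1 + a * x) := by
    rw [← Nat.mul_succ, mul_comm]
    exact exists_critOrbit_mul_eq hd hn q.succ_pos
  obtain ⟨y, hy⟩ : ∃ y, critOrbit d c (n * q) = a * (1 + a * y) := by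
    rw [mul_comm]
    exact exists_critOrbit_mul_eq hd hn hq
  set V := ∑ i ∈ Finset.range d, (1 + a * x) ^ i * (1 + a * y) ^ (d - 1 - i)
  have hV : a ∣ V - d := by
    rw [← Ideal.mem_span_singleton, ← Ideal.Quotient.eq_zero_iff_mem]
    have ha : Ideal.Quotient.mk (Ideal.span {a}) a = 0 :=
      Ideal.Quotient.eq_zero_iff_mem.2 (Ideal.mem_span_singleton_self a)
    simp [V, ha]
  obtain ⟨w, hw⟩ := hV
  refine ⟨w, ?_⟩
  rw [← hw, add_sub_cancel, gapRatio, hx, hy, Finset.mul_sum]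
  refine Finset.sum_congr rfl fun i hi => ?_
  have hsplit : a ^ (d - 1) = a ^ i * a ^ (d - 1 - i) := by
    rw [← pow_add, Nat.add_sub_cancel' (Nat.le_sub_one_of_lt (Finset.mem_range.1 hi))]
  rw [hsplit, mul_pow, mul_pow]
  ring

lemma orbitGap_eq_pow_of_charP [Fact d.Prime] [CharP R d] (c : R) (j k : ℕ) :
    orbitGap d c j k = critOrbit d c k ^ d ^ j := by
  induction j with
  | zero => simp
  | succ j ih =>
    rw [pow_succ, pow_mul, ← ih, orbitGap, orbitGap, sub_pow_char, add_right_comm j 1 k,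
      critOrbit_succ, critOrbit_succ, add_sub_add_right_eq_sub]

lemma exists_orbitGap_succ_eq_pow_add (hd : d.Prime) (c : R) (j k : ℕ) :
    ∃ w, orbitGap d c (j + 1) k = orbitGap d c j k ^ d + d * orbitGap d c j k * w := by
  obtain ⟨r, hr⟩ := exists_add_pow_prime_eq hd (orbitGap d c j k) (critOrbit d c j)
  refine ⟨critOrbit d c j * r, ?_⟩
  rw [show orbitGap d c j k + critOrbit d c j = critOrbit d c (j + k) from sub_add_cancel _ _] at hr
  rw [orbitGap, add_right_comm j 1 k, critOrbit_succ, critOrbit_succ, hr]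
  ring

/-- A period of the critical orbit: for `k > 0`, the point `a_j` has period `k` iff `a_j` has
period `p` and `p ∣ k`. An infinite orbit has every `p > 0` as a period in this sense. -/
structure IsCritPeriod (d : ℕ) (c : R) (p : ℕ) : Prop where
  pos : 0 < p
  orbitGap_eq_zero_iff : ∀ {j k}, 0 < k → (orbitGap d c j k = 0 ↔ p ∣ k ∧ orbitGap d c j p = 0)

lemma exists_isCritPeriod (d : ℕ) (c : R) : ∃ p, IsCritPeriod d c p := by
  by_cases hfin : ∃ i, critOrbit d c i ∈ Function.periodicPts (unicritical d c)
  · obtain ⟨i, hi⟩ := hfin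
    refine ⟨_, Function.minimalPeriod_pos_of_mem_periodicPts hi, fun {j k} hk => ?_⟩
    simp only [orbitGap_eq_zero_iff_isPeriodicPt]
    refine ⟨fun hjk => ?_, fun ⟨⟨q, hq⟩, hp⟩ => hq ▸ hp.mul_const q⟩
    have hj : critOrbit d c j ∈ Function.periodicPts (unicritical d c) := ⟨k, hk, hjk⟩
    have hij : (unicritical d c)^[j] (critOrbit d c i) =
        (unicritical d c)^[i] (critOrbit d c j) := by
      simp only [critOrbit, ← Function.iterate_add_apply, add_comm]
    rw [← Function.minimalPeriod_apply_iterate hi j, hij,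
      Function.minimalPeriod_apply_iterate hj i]
    exact ⟨hjk.minimalPeriod_dvd, Function.isPeriodicPt_minimalPeriod _ _⟩
  · have hne : ∀ {j k}, 0 < k → orbitGap d c j k ≠ 0 := fun {j k} hk h =>
      hfin ⟨j, k, hk, (orbitGap_eq_zero_iff_isPeriodicPt d c).1 h⟩
    exact ⟨1, one_pos, fun hk => iff_of_false (hne hk) fun h => hne one_pos h.2⟩

lemma orbitGap_X_ne_zero [Fact d.Prime] (j : ℕ) {k : ℕ} (hk : 0 < k) :
    orbitGap d (X : ℤ[X]) j k ≠ 0 := by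
  intro h
  have hred : orbitGap d (X : (ZMod d)[X]) j k = 0 := by
    simpa [map_orbitGap] using congrArg (mapRingHom (Int.castRingHom (ZMod d))) h
  obtain ⟨i, rfl⟩ := Nat.exists_eq_add_of_lt hk
  rw [orbitGap_eq_pow_of_charP] at hred
  have hderiv := congrArg derivative (eq_zero_of_pow_eq_zero hred)
  simp [critOrbit_succ, derivative_pow] at hderiv

end CriticalOrbit

section RatioCongruence

lemma prod_ite_dvd_zpow_moebius {F : Type*} [CommGroupWithZero F] {n : ℕ} (p : ℕ) {y : F}
    (hn : 0 < n) (hy : y ≠ 0) :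
    ∏ k ∈ n.divisors, (if p ∣ k then y else 1) ^ ArithmeticFunction.moebius (n / k) =
      if p = n then y else 1 := by
  have hinv := (ArithmeticFunction.prod_eq_iff_prod_pow_moebius_eq_of_nonzero
    (f := fun i => if p = i then y else 1) (g := fun k => if p ∣ k then y else 1)
    (fun i _ => by split_ifs <;> simp [hy]) (fun k _ => by split_ifs <;> simp [hy])).1
    fun k hk => by simp [Finset.prod_ite_eq, hk.ne']
  rw [← hinv n hn, Nat.prod_divisorsAntidiagonal'
    fun i k => (if p ∣ k then y else 1) ^ ArithmeticFunction.moebius i]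

variable {A F : Type*} [CommRing A] [Field F] [Algebra A F]

/-- Equality in the field `F` up to multiplication by a quotient of elements of `S`. -/
def ratioCon (F : Type*) [Field F] [Algebra A F] (S : Submonoid A) : Con F where
  r x y := ∃ a ∈ S, ∃ b ∈ S, x * algebraMap A F b = y * algebraMap A F a
  iseqv :=
    { refl := fun _ => ⟨1, S.one_mem, 1, S.one_mem, rfl⟩
      symm := fun ⟨a, ha, b, hb, h⟩ => ⟨b, hb, a, ha, h.symm⟩
      trans := fun {x y z} ⟨a, ha, b, hb, h⟩ ⟨a', ha', b', hb', h'⟩ =>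
        ⟨a * a', S.mul_mem ha ha', b * b', S.mul_mem hb hb', by
          rw [map_mul, map_mul, ← mul_assoc, h, mul_right_comm, h', mul_right_comm, mul_assoc]⟩ }
  mul' := fun {w x y z} ⟨a, ha, b, hb, h⟩ ⟨a', ha', b', hb', h'⟩ =>
    ⟨a * a', S.mul_mem ha ha', b * b', S.mul_mem hb hb', by
      rw [map_mul, map_mul, mul_mul_mul_comm, h, h', mul_mul_mul_comm]⟩

namespace ratioCon

variable {S : Submonoid A} {x y x' y' : F}

lemma of_mem {a : A} (ha : a ∈ S) : ratioCon F S (algebraMap A F a) 1 :=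
  ⟨a, ha, 1, S.one_mem, by simp⟩

variable (hS : ∀ a ∈ S, algebraMap A F a ≠ 0)

include hS

lemma inv (h : ratioCon F S x y) : ratioCon F S x⁻¹ y⁻¹ := by
  obtain ⟨a, ha, b, hb, h⟩ := h
  refine ⟨b, hb, a, ha, ?_⟩
  have hinv : x⁻¹ * (algebraMap A F b)⁻¹ = y⁻¹ * (algebraMap A F a)⁻¹ := by
    rw [← mul_inv, ← mul_inv, h]
  rwa [← div_eq_mul_inv, ← div_eq_mul_inv, div_eq_div_iff (hS b hb) (hS a ha)] at hinv

lemma div (h : ratioCon F S x y) (h' : ratioCon F S x' y') :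
    ratioCon F S (x / x') (y / y') := by
  rw [div_eq_mul_inv, div_eq_mul_inv]
  exact (ratioCon F S).mul h (inv hS h')

lemma zpow (h : ratioCon F S x y) : ∀ e : ℤ, ratioCon F S (x ^ e) (y ^ e)
  | Int.ofNat e => by simpa using (ratioCon F S).pow e h
  | Int.negSucc e => by simpa only [zpow_negSucc] using inv hS ((ratioCon F S).pow (e + 1) h)

lemma prod_zpow_moebius {n p : ℕ} (hn : 0 < n) (hy : y ≠ 0) {g : ℕ → F}
    (hg : ∀ k ∈ n.divisors, ratioCon F S (g k) (if p ∣ k then y else 1)) :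
    ratioCon F S (∏ k ∈ n.divisors, g k ^ ArithmeticFunction.moebius (n / k))
      (if p = n then y else 1) := by
  rw [← prod_ite_dvd_zpow_moebius p hn hy]
  exact (ratioCon F S).finsetProd _ fun k hk => zpow hS (hg k hk) _

end ratioCon

end RatioCongruence

section MisiurewiczRatio

lemma toRF_mul (q r : ℤ[X]) : toRF (q * r) = toRF q * toRF r := map_mul _ _ _

lemma toRF_ne_zero {q : ℤ[X]} : toRF q ≠ 0 ↔ q ≠ 0 :=
  (FaithfulSMul.algebraMap_eq_zero_iff _ _).not

variable {R : Type*} [CommRing R] [IsDomain R] {c : R} {d p : ℕ}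

/-- The integer polynomials that do not vanish at `c`. -/
def nonvanishing (c : R) : Submonoid ℤ[X] := (nonZeroDivisors R).comap (aeval c)

lemma mem_nonvanishing {q : ℤ[X]} : q ∈ nonvanishing c ↔ aeval c q ≠ 0 :=
  mem_nonZeroDivisors_iff_ne_zero

lemma algebraMap_ne_zero_of_mem_nonvanishing (c : R) :
    ∀ q ∈ nonvanishing c, algebraMap ℤ[X] RF q ≠ 0 := by
  intro q hq h
  rw [FaithfulSMul.algebraMap_eq_zero_iff] at h
  exact mem_nonvanishing.1 hq (h ▸ map_zero _)

lemma ratioCon_orbitGap (hdu : ¬IsUnit (d : R)) (hp : IsCritPeriod d c p) (j : ℕ) {k : ℕ}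
    (hk : 0 < k) :
    ratioCon RF (nonvanishing c) (toRF (orbitGap d X j k))
      (if p ∣ k then toRF (orbitGap d X j p) else 1) := by
  have of_ne_zero : ∀ i, orbitGap d c j i ≠ 0 →
      ratioCon RF (nonvanishing c) (toRF (orbitGap d X j i)) 1 := fun i hi =>
    ratioCon.of_mem (mem_nonvanishing.2 (by rwa [map_orbitGap, aeval_X]))
  by_cases hjk : orbitGap d c j k ≠ 0
  · refine (ratioCon _ _).trans (of_ne_zero k hjk) ((ratioCon _ _).symm ?_)
    split_ifs with hpk
    · exact of_ne_zero p fun hjp => hjk ((hp.orbitGap_eq_zero_iff hk).2 ⟨hpk, hjp⟩)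
    · exact (ratioCon _ _).refl 1
  obtain ⟨hpk, hjp⟩ := (hp.orbitGap_eq_zero_iff hk).1 (not_not.1 hjk)
  rw [if_pos hpk]
  obtain ⟨q, rfl⟩ := hpk
  -- At a periodic point `gapRatio` specializes to a multiple of `d`, so the quotient of the two
  -- vanishing gaps specializes to `1` modulo `d`, hence not to `0`.
  have hratio : gapRatio d X j p ∈ (Ideal.span {(d : R)}).comap (aeval (R := ℤ) c) := by
    rw [Ideal.mem_comap, map_gapRatio, aeval_X, gapRatio_of_orbitGap_eq_zero hjp]
    exact Ideal.mul_mem_right _ _ (Ideal.mem_span_singleton_self _)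
  obtain ⟨x, hx, hgap⟩ := exists_orbitGap_mul_eq hp.pos (Nat.pos_of_mul_pos_left hk) hratio
  obtain ⟨w, hw⟩ := Ideal.mem_span_singleton.1 (Ideal.mem_comap.1 hx)
  have hone : ratioCon RF (nonvanishing c) (toRF (1 + x)) 1 := by
    refine ratioCon.of_mem (mem_nonvanishing.2 fun h => hdu (.of_mul_eq_one (-w) ?_))
    rw [map_add, map_one, hw] at h
    linear_combination -h
  rw [mul_comm, hgap, toRF_mul]
  simpa only [mul_one] using
    (ratioCon RF _).mul ((ratioCon RF _).refl (toRF (orbitGap d X j p))) hone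

variable [Fact d.Prime]

lemma toRF_gapRatio (j : ℕ) {k : ℕ} (hk : 0 < k) :
    toRF (gapRatio d X j k) = toRF (orbitGap d X (j + 1) k) / toRF (orbitGap d X j k) := by
  rw [orbitGap_succ, toRF_mul, mul_div_cancel_left₀ _ (toRF_ne_zero.2 (orbitGap_X_ne_zero j hk))]

lemma gapRatio_X_ne_zero (j : ℕ) {k : ℕ} (hk : 0 < k) : gapRatio d (X : ℤ[X]) j k ≠ 0 :=
  right_ne_zero_of_mul (orbitGap_succ d (X : ℤ[X]) j k ▸ orbitGap_X_ne_zero (j + 1) hk)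

lemma ratioCon_FRat (hdu : ¬IsUnit (d : R)) (hp : IsCritPeriod d c p) (j : ℕ) {n : ℕ}
    (hn : 0 < n) :
    ratioCon RF (nonvanishing c) (FRat d (j + 1) n)
      (if p = n then toRF (gapRatio d X j n) else 1) := by
  have hS := algebraMap_ne_zero_of_mem_nonvanishing c
  have hFRat : FRat d (j + 1) n =
      ∏ k ∈ n.divisors, toRF (gapRatio d X j k) ^ ArithmeticFunction.moebius (n / k) := by
    refine Finset.prod_congr rfl fun k hk => ?_
    rw [toRF_gapRatio j (Nat.pos_of_mem_divisors hk)]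
    simp only [toRF, critPoly_eq_critOrbit, orbitGap, map_sub, Nat.add_sub_cancel]
  have hratio : ∀ k ∈ n.divisors, ratioCon RF (nonvanishing c) (toRF (gapRatio d X j k))
      (if p ∣ k then toRF (gapRatio d X j p) else 1) := by
    intro k hk
    have hk := Nat.pos_of_mem_divisors hk
    rw [toRF_gapRatio j hk, toRF_gapRatio j hp.pos]
    have h := ratioCon.div hS (ratioCon_orbitGap hdu hp (j + 1) hk) (ratioCon_orbitGap hdu hp j hk)
    split_ifs at h ⊢ <;> simpa using h
  have hprod := ratioCon.prod_zpow_moebius hS hn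
    (toRF_ne_zero.2 (gapRatio_X_ne_zero j hp.pos)) hratio
  rw [hFRat]
  obtain rfl | hpn := eq_or_ne p n
  · exact hprod
  · rwa [if_neg hpn] at hprod ⊢

lemma ratioCon_GRat (hdu : ¬IsUnit (d : R)) (hp : IsCritPeriod d c p) {l n : ℕ} (hn : 0 < n)
    {V : ℤ[X]} (hV : gapRatio d X l n = (if n ∣ l then critOrbit d X n ^ (d - 1) else 1) * V) :
    ratioCon RF (nonvanishing c) (GRat d (l + 1) n) (if p = n then toRF V else 1) := by
  have hS := algebraMap_ne_zero_of_mem_nonvanishing c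
  have hd : d ≠ 0 := (Fact.out : d.Prime).ne_zero
  have hl := ratioCon_FRat hdu hp l hn
  rw [hV] at hl
  rw [GRat, Nat.add_sub_cancel]
  by_cases hnl : n ∣ l
  · have h := ratioCon.div hS hl (ratioCon_FRat hdu hp 0 hn)
    have hne := toRF_ne_zero.2 (gapRatio_X_ne_zero (d := d) 0 hn)
    rw [gapRatio_zero_left d X hd] at h hne
    rw [if_pos hnl]
    rw [if_pos hnl, toRF_mul] at h
    split_ifs at h ⊢
    · rwa [mul_div_cancel_left₀ _ hne] at h
    · rwa [div_one] at h
  · rw [if_neg hnl, one_mul] at hl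
    rwa [if_neg hnl]

lemma exists_mul_eq_of_ratioCon {S : Submonoid ℤ[X]} {q r : ℤ[X]}
    (h : ratioCon RF S (toRF q) (toRF r)) : ∃ a ∈ S, ∃ b ∈ S, q * b = r * a := by
  obtain ⟨a, ha, b, hb, h⟩ := h
  exact ⟨a, ha, b, hb, IsFractionRing.injective ℤ[X] RF (by simpa only [map_mul] using! h)⟩

lemma aeval_eq_zero_of_ratioCon {q r : ℤ[X]}
    (h : ratioCon RF (nonvanishing c) (toRF q) (toRF r)) (hq : aeval c q = 0) :
    aeval c r = 0 := by
  obtain ⟨a, ha, b, -, h⟩ := exists_mul_eq_of_ratioCon h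
  refine (mul_eq_zero.1 ?_).resolve_right (mem_nonvanishing.1 ha)
  rw [← map_mul, ← h, map_mul, hq, zero_mul]

/-- The parameter `c` is a Misiurewicz point of type `(l + 1, n)`: the point `0` is preperiodic
under `f_{c,d}` with preperiod exactly `l + 1` and exact period `n`. -/
structure IsMisiurewiczPoint (d : ℕ) (c : R) (l n : ℕ) : Prop where
  isCritPeriod : IsCritPeriod d c n
  orbitGap_succ_eq_zero : orbitGap d c (l + 1) n = 0
  orbitGap_ne_zero : orbitGap d c l n ≠ 0

variable {l n : ℕ} {G : ℤ[X]}

lemma IsMisiurewicz.gapRatio_eq_zero (hG : IsMisiurewicz d (l + 1) n G) (hdu : ¬IsUnit (d : R))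
    (hl : 0 < l) (hn : 0 < n) (hroot : aeval c G = 0) :
    IsCritPeriod d c n ∧ gapRatio d c l n = 0 ∧ (n ∣ l → critOrbit d c n ∣ d) := by
  have hd2 : 2 ≤ d := (Fact.out : d.Prime).two_le
  obtain ⟨V, hV, hVw⟩ : ∃ V : ℤ[X],
      gapRatio d X l n = (if n ∣ l then critOrbit d X n ^ (d - 1) else 1) * V ∧
        (n ∣ l → ∃ w, V = (d : ℤ[X]) + critOrbit d X n * w) := by
    by_cases hnl : n ∣ l
    · obtain ⟨w, hw⟩ := exists_gapRatio_eq_of_dvd (c := (X : ℤ[X])) hd2 hl hn hnl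
      exact ⟨_, by rw [if_pos hnl, hw], fun _ => ⟨w, rfl⟩⟩
    · exact ⟨_, by rw [if_neg hnl, one_mul], fun h => absurd h hnl⟩
  obtain ⟨p, hp⟩ := exists_isCritPeriod d c
  have hratio : ratioCon RF (nonvanishing c) (toRF G) (toRF (if p = n then V else 1)) := by
    rw [hG, apply_ite toRF, show toRF 1 = 1 from map_one _]
    exact ratioCon_GRat hdu hp hn hV
  have hzero := aeval_eq_zero_of_ratioCon hratio hroot
  have hpn : p = n := by
    by_contra hpn
    simp [hpn] at hzero
  rw [if_pos hpn] at hzero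
  refine ⟨hpn ▸ hp, ?_, fun hnl => ?_⟩
  · rw [← aeval_X (R := ℤ) c, ← map_gapRatio, hV, map_mul, hzero, mul_zero]
  · obtain ⟨w, rfl⟩ := hVw hnl
    refine ⟨-aeval c w, ?_⟩
    simp only [map_add, map_mul, map_natCast, map_critOrbit, aeval_X] at hzero
    linear_combination hzero

theorem IsMisiurewicz.isMisiurewiczPoint (hG : IsMisiurewicz d (l + 1) n G)
    (hd0 : (d : R) ≠ 0) (hdu : ¬IsUnit (d : R)) (hl : 0 < l) (hn : 0 < n)
    (hroot : aeval c G = 0) : IsMisiurewiczPoint d c l n := by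
  obtain ⟨hp, hratio, hdvd⟩ := hG.gapRatio_eq_zero hdu hl hn hroot
  refine ⟨hp, by rw [orbitGap_succ, hratio, mul_zero], fun hgap => ?_⟩
  rw [gapRatio_of_orbitGap_eq_zero hgap, mul_eq_zero_iff_left hd0] at hratio
  obtain ⟨hnl, hcn⟩ := (hp.orbitGap_eq_zero_iff (j := 0) hl).1 (by
    rw [orbitGap_zero_left]; exact eq_zero_of_pow_eq_zero hratio)
  rw [orbitGap_zero_left] at hcn
  exact hd0 (zero_dvd_iff.1 (hcn ▸ hdvd hnl))

lemma IsG0.exists_mul_eq {G₀ : ℤ[X]} (hG₀ : IsG0 d n G₀) (hn : 0 < n) {S : Submonoid ℤ[X]}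
    (hS : (0 : ℤ[X]) ∉ S) (hmem : ∀ k, 0 < k → ¬n ∣ k → critOrbit d X k ∈ S) :
    ∃ a ∈ S, ∃ b ∈ S, G₀ * b = critOrbit d X n * a := by
  refine exists_mul_eq_of_ratioCon ?_
  have hne : critOrbit d (X : ℤ[X]) n ≠ 0 :=
    orbitGap_zero_left d (X : ℤ[X]) n ▸ orbitGap_X_ne_zero 0 hn
  have hS' : ∀ q ∈ S, algebraMap ℤ[X] RF q ≠ 0 := fun q hq =>
    toRF_ne_zero.2 (ne_of_mem_of_not_mem hq hS)
  have hprod := ratioCon.prod_zpow_moebius hS' (p := n) hn (toRF_ne_zero.2 hne)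
    (g := fun k => toRF (critPoly d k)) fun k hk => by
      rw [critPoly_eq_critOrbit]
      have hkn := Nat.dvd_of_mem_divisors hk
      split_ifs with hnk
      · rw [Nat.dvd_antisymm hkn hnk]
        exact (ratioCon _ _).refl _
      · exact ratioCon.of_mem (hmem k (Nat.pos_of_mem_divisors hk) hnk)
  rw [if_pos rfl] at hprod
  rwa [hG₀]

end MisiurewiczRatio

section Divisibility

variable {R : Type*} [CommRing R] [IsDomain R]

lemma mul_pow_dvd_of_pow_add_dvd {A D t w δ : R} {e : ℕ} (he : e ≠ 0) (hA : A ≠ 0)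
    (hAδ : A ^ 2 ∣ δ) (hδ : δ ^ (e + 1) + D * δ * w ∣ A * t) (ht : t ^ e ∣ D) :
    A * δ ^ e ∣ D := by
  have htD : t ∣ D := (dvd_pow_self t he).trans ht
  have hmul : ∀ {B}, B ∣ D → B ∣ δ → B * δ ∣ A * t := fun {B} hBD hBδ => by
    refine dvd_trans (dvd_add ?_ ?_) hδ
    · rw [pow_succ]
      exact mul_dvd_mul_right (dvd_pow hBδ he) δ
    · exact (mul_dvd_mul_right hBD δ).mul_right w
  have hAt : A ∣ t := by
    rw [← mul_dvd_mul_iff_left hA, ← sq]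
    exact (hAδ.mul_left 1).trans (hmul (one_dvd D) (one_dvd δ))
  have hδt : δ ∣ t := (mul_dvd_mul_iff_left hA).1
    (hmul (hAt.trans htD) ((dvd_pow_self A two_ne_zero).trans hAδ))
  have hAδt : A * δ ∣ t := by
    rw [← mul_dvd_mul_iff_left hA, ← mul_assoc, ← sq]
    exact hmul ((hAδ.trans hδt).trans htD) hAδ
  calc A * δ ^ e ∣ A ^ e * δ ^ e := mul_dvd_mul_right (dvd_pow_self A he) _
    _ = (A * δ) ^ e := (mul_pow A δ e).symm
    _ ∣ D := (pow_dvd_pow_of_dvd hAδt e).trans ht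

lemma associated_pow_add {A D t w δ : R} {p K : ℕ} (hp : 1 < p) (hA : A ≠ 0)
    (hAδ : A ^ 2 ∣ δ) (hδ : δ ^ p + D * δ * w ∣ A * t) (ht : t ^ (p - 1) ∣ D)
    (hD : D ∣ A ^ K) : Associated (δ ^ p + D * δ * w) (δ ^ p) := by
  obtain ⟨e, rfl⟩ : ∃ e, p = e + 1 := Nat.exists_eq_add_of_le' hp.le
  have he : e ≠ 0 := by omega
  obtain ⟨z, hz⟩ := mul_pow_dvd_of_pow_add_dvd he hA hAδ hδ ht
  have hfac : δ ^ (e + 1) + D * δ * w = δ ^ (e + 1) * (1 + A * (z * w)) := by rw [hz]; ring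
  -- `1 + Azw` is coprime to `A` and divides a power of `A`.
  have hunit : IsUnit (1 + A * (z * w)) := by
    refine IsCoprime.isUnit_of_dvd' (b := A ^ (K + 1)) ?_ dvd_rfl ?_
    · exact IsCoprime.pow_right ⟨1, -(z * w), by ring⟩
    · calc 1 + A * (z * w) ∣ A * t := (Dvd.intro_left _ hfac.symm).trans hδ
        _ ∣ A * A ^ K := mul_dvd_mul_left A (((dvd_pow_self t he).trans ht).trans hD)
        _ = A ^ (K + 1) := (pow_succ' A K).symm
  rw [hfac]
  exact associated_mul_unit_left _ _ hunit

variable {p : ℕ}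

lemma associated_sub_one_pow_of_isPrimitiveRoot (hp : p.Prime) {ζ : R}
    (hζ : IsPrimitiveRoot ζ p) : Associated ((ζ - 1) ^ (p - 1)) (p : R) := by
  have hp1 : p - 1 + 1 = p := Nat.sub_add_cancel hp.one_le
  have hprod : ∏ k ∈ Finset.range (p - 1), (1 - ζ ^ (k + 1)) = (p : R) := by
    rw [(hp1.symm ▸ hζ : IsPrimitiveRoot ζ (p - 1 + 1)).prod_one_sub_pow_eq_order,
      ← Nat.cast_add_one, hp1]
  rw [← hprod, ← Finset.card_range (p - 1), ← Finset.prod_const, Finset.card_range]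
  refine Associated.prod _ _ _ fun k hk => ?_
  have hkp : (k + 1).Coprime p := (Nat.coprime_of_lt_prime k.succ_ne_zero
    (by have := Finset.mem_range.1 hk; omega) hp).symm
  rw [← neg_sub (ζ ^ (k + 1))]
  exact (hζ.associated_sub_one_pow_sub_one_of_coprime hkp).neg_right

lemma associated_pow_sub_one_of_add_pow_eq_pow (hp : p.Prime) {u t : R} (hu : IsUnit u)
    (ht : t ≠ 0) (h : (u + t) ^ p = u ^ p) : Associated (t ^ (p - 1)) (p : R) := by
  obtain ⟨u, rfl⟩ := hu
  have : Fact p.Prime := ⟨hp⟩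
  have hζ : IsPrimitiveRoot (1 + t * ↑u⁻¹) p := by
    rw [IsPrimitiveRoot.iff_orderOf]
    refine orderOf_eq_prime ?_ ?_
    · rw [← Units.mul_inv u, ← add_mul, mul_pow, h, ← mul_pow, Units.mul_inv, one_pow]
    · simpa using ht
  have hassoc := associated_sub_one_pow_of_isPrimitiveRoot hp hζ
  rw [add_sub_cancel_left, mul_pow] at hassoc
  exact (associated_mul_isUnit_right_iff (u⁻¹.isUnit.pow _)).1 hassoc.symm |>.symm

end Divisibility

/-- The exponent `M_{m,n}` of the factorization of `(d)`. -/
def misiurewiczExponent (d m n : ℕ) : ℕ :=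
  if n ∣ m - 1 then (d ^ (m - 1) - 1) * (d - 1) else d ^ (m - 1) * (d - 1)

namespace IsMisiurewiczPoint

variable {R : Type*} [CommRing R] {c : R} {d l n : ℕ}

lemma orbitGap_eq_zero (h : IsMisiurewiczPoint d c l n) {j : ℕ} (hj : l < j) :
    orbitGap d c j n = 0 :=
  zero_dvd_iff.1 (h.orbitGap_succ_eq_zero ▸ orbitGap_dvd_orbitGap d c n hj)

lemma critOrbit_ne_zero (h : IsMisiurewiczPoint d c l n) : critOrbit d c n ≠ 0 := by
  rw [← orbitGap_zero_left]
  exact ne_zero_of_dvd_ne_zero h.orbitGap_ne_zero (orbitGap_dvd_orbitGap d c n l.zero_le)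

lemma critOrbit_dvd (h : IsMisiurewiczPoint d c l n) {i : ℕ} (hi : 0 < i) :
    critOrbit d c i ∣ critOrbit d c n := by
  have hil : l < i * (l + 1) := Nat.lt_of_succ_le (Nat.le_mul_of_pos_left _ hi)
  have hmem : critOrbit d c (i * (l + 1)) ∈ Ideal.span {critOrbit d c i} :=
    Ideal.mem_span_singleton.2 (critOrbit_dvd_critOrbit d c (dvd_mul_right i _))
  have hmem' : critOrbit d c (i * (l + 1) + n) ∈ Ideal.span {critOrbit d c i} := by
    rwa [sub_eq_zero.1 (h.orbitGap_eq_zero hil)]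
  rw [← Ideal.mem_span_singleton]
  rw [critOrbit_mem_iff_isPeriodicPt] at hmem hmem' ⊢
  exact hmem'.right_of_add hmem

lemma natCast_dvd_pow (h : IsMisiurewiczPoint d c l n) (hd : d.Prime) :
    (d : R) ∣ critOrbit d c n ^ d ^ (l + 1) := by
  have : Fact d.Prime := ⟨hd⟩
  by_cases hdu : IsUnit (d : R)
  · exact hdu.dvd
  rw [← Ideal.mem_span_singleton, ← Ideal.Quotient.eq_zero_iff_mem, map_pow, map_critOrbit]
  have : CharP (R ⧸ Ideal.span {(d : R)}) d := CharP.quotient R d hdu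
  rw [← orbitGap_eq_pow_of_charP, ← map_orbitGap, h.orbitGap_succ_eq_zero, map_zero]

variable [IsDomain R]

lemma isUnit_critOrbit (h : IsMisiurewiczPoint d c l n) (hd : 2 ≤ d) {i : ℕ} (hi : 0 < i)
    (hni : ¬n ∣ i) : IsUnit (critOrbit d c i) := by
  set I := Ideal.span {critOrbit d c i}
  have hiI : critOrbit d c i ∈ I := Ideal.mem_span_singleton_self _
  have hnI : critOrbit d c n ∈ I := Ideal.mem_span_singleton.2 (h.critOrbit_dvd hi)
  set r := i.gcd n
  have hr : 0 < r := Nat.gcd_pos_of_pos_left _ hi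
  have hrI : ∀ q, critOrbit d c (r * q) ∈ I := by
    rw [critOrbit_mem_iff_isPeriodicPt] at hiI hnI
    exact fun q => (critOrbit_mem_iff_isPeriodicPt d c I).2 ((hiI.gcd hnI).mul_const q)
  have hratio : gapRatio d c (r * (l + 1)) r ∈ I := gapRatio_mem hd (hrI (l + 2)) (hrI (l + 1))
  obtain ⟨q, hq⟩ : ∃ q, n = q * r := exists_eq_mul_left_of_dvd (Nat.gcd_dvd_right i n)
  have hn : 0 < n := h.isCritPeriod.pos
  obtain ⟨x, hx, hgap⟩ := exists_orbitGap_mul_eq hr (Nat.pos_of_mul_pos_right (hq ▸ hn)) hratio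
  rw [← hq, h.orbitGap_eq_zero (Nat.lt_of_succ_le (Nat.le_mul_of_pos_left _ hr)),
    eq_comm, mul_eq_zero, h.isCritPeriod.orbitGap_eq_zero_iff hr] at hgap
  have hx1 : 1 + x = 0 := hgap.resolve_left fun h => hni (h.1.trans (Nat.gcd_dvd_left i n))
  rw [← Ideal.span_singleton_eq_top, Ideal.eq_top_iff_one]
  rw [eq_neg_of_add_eq_zero_left hx1]
  exact I.neg_mem hx

lemma associated_critOrbit (h : IsMisiurewiczPoint d c l n) (hd : 2 ≤ d) (hl : 0 < l) :
    Associated (if n ∣ l then critOrbit d c n else 1) (critOrbit d c l) := by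
  split_ifs with hnl
  · exact associated_of_dvd_dvd (critOrbit_dvd_critOrbit d c hnl) (h.critOrbit_dvd hl)
  · exact (associated_one_iff_isUnit.2 (h.isUnit_critOrbit hd hl hnl)).symm

lemma exists_orbitGap_eq_mul (h : IsMisiurewiczPoint d c l n) (hd : d.Prime) (hl : 0 < l) :
    ∃ t : R, Associated (t ^ (d - 1)) (d : R) ∧
      orbitGap d c l n = (if n ∣ l then critOrbit d c n else 1) * t := by
  set e := if n ∣ l then critOrbit d c n else 1 with he
  obtain ⟨u, hu⟩ := h.associated_critOrbit hd.two_le hl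
  obtain ⟨s, hs⟩ : e ∣ critOrbit d c (l + n) := by
    rw [he]
    split_ifs with hnl
    exacts [critOrbit_dvd_critOrbit d c (hnl.add dvd_rfl), one_dvd _]
  have he0 : e ≠ 0 := by
    rw [he]
    split_ifs
    exacts [h.critOrbit_ne_zero, one_ne_zero]
  have hgap : orbitGap d c l n = e * (s - u) := by rw [orbitGap, hs, ← hu, mul_sub]
  refine ⟨s - u, ?_, hgap⟩
  refine associated_pow_sub_one_of_add_pow_eq_pow hd u.isUnit ?_ ?_
  · exact right_ne_zero_of_mul (hgap ▸ h.orbitGap_ne_zero)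
  · have hpow := h.orbitGap_succ_eq_zero
    rw [orbitGap, add_right_comm, critOrbit_succ, critOrbit_succ, add_sub_add_right_eq_sub,
      sub_eq_zero, hs, ← hu, mul_pow, mul_pow] at hpow
    rw [add_sub_cancel]
    exact mul_left_cancel₀ (pow_ne_zero _ he0) hpow

lemma associated_orbitGap (h : IsMisiurewiczPoint d c l n) (hd : d.Prime) {j : ℕ} (hj : 0 < j)
    (hjl : j ≤ l) : Associated (orbitGap d c j n) (critOrbit d c n ^ d ^ j) := by
  induction j, hj using Nat.le_induction with
  | base =>
    rw [orbitGap_succ, gapRatio_zero_left d c hd.ne_zero, orbitGap_zero_left, pow_one,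
      mul_pow_sub_one hd.ne_zero]
  | succ j hj ih =>
    have hδ := ih (Nat.le_of_succ_le hjl)
    obtain ⟨t, htd, hgap⟩ := h.exists_orbitGap_eq_mul hd (Nat.zero_lt_of_lt hjl)
    obtain ⟨w, hw⟩ := exists_orbitGap_succ_eq_pow_add hd c j n
    have hdvd : orbitGap d c (j + 1) n ∣ critOrbit d c n * t := by
      refine (orbitGap_dvd_orbitGap d c n hjl).trans (hgap ▸ mul_dvd_mul_right ?_ t)
      split_ifs
      exacts [dvd_rfl, one_dvd _]
    have hsq : critOrbit d c n ^ 2 ∣ orbitGap d c j n :=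
      (pow_dvd_pow _ (hd.two_le.trans (Nat.le_self_pow (Nat.ne_of_gt hj) d))).trans hδ.symm.dvd
    rw [hw] at hdvd ⊢
    rw [pow_succ, pow_mul]
    exact (associated_pow_add hd.one_lt h.critOrbit_ne_zero hsq hdvd htd.dvd
      (h.natCast_dvd_pow hd)).trans hδ.pow_pow

theorem associated_pow_misiurewiczExponent (h : IsMisiurewiczPoint d c l n) (hd : d.Prime)
    (hl : 0 < l) : Associated (critOrbit d c n ^ misiurewiczExponent d (l + 1) n) (d : R) := by
  obtain ⟨t, htd, hgap⟩ := h.exists_orbitGap_eq_mul hd hl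
  have hpow : Associated (critOrbit d c n ^ (d ^ l * (d - 1)))
      ((if n ∣ l then critOrbit d c n else 1) ^ (d - 1) * d) :=
    calc Associated (critOrbit d c n ^ (d ^ l * (d - 1))) (orbitGap d c l n ^ (d - 1)) := by
          rw [pow_mul]
          exact ((h.associated_orbitGap hd hl le_rfl).pow_pow).symm
      _ = (if n ∣ l then critOrbit d c n else 1) ^ (d - 1) * t ^ (d - 1) := by rw [hgap, mul_pow]
      Associated _ _ := htd.mul_left _
  rw [misiurewiczExponent, Nat.add_sub_cancel]
  split_ifs at hpow ⊢
  · have hsplit : d ^ l * (d - 1) = d - 1 + (d ^ l - 1) * (d - 1) := by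
      rw [Nat.sub_one_mul, Nat.add_sub_cancel' (Nat.le_mul_of_pos_left _ (Nat.pow_pos hd.pos))]
    rw [hsplit, pow_add] at hpow
    exact hpow.of_mul_left (.refl _) (pow_ne_zero _ h.critOrbit_ne_zero)
  · simpa using hpow

end IsMisiurewiczPoint

section SpanPair

variable {R ι : Type*} [CommRing R] {D : R}

lemma left_mem_span_pair (y z : R) : y ∈ Ideal.span {y, z} :=
  Ideal.subset_span (Set.mem_insert y _)

lemma right_mem_span_pair (y z : R) : z ∈ Ideal.span {y, z} :=
  Ideal.subset_span (Set.mem_insert_of_mem y rfl)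

lemma aeval_mem_span_pair_of_map_dvd {d : ℕ} {p q : ℤ[X]}
    (h : p.map (Int.castRingHom (ZMod d)) ∣ q.map (Int.castRingHom (ZMod d))) (c : R) :
    aeval c q ∈ Ideal.span {(d : R), aeval c p} := by
  obtain ⟨r, hr⟩ := h
  obtain ⟨r, rfl⟩ := map_surjective (Int.castRingHom (ZMod d)) (ZMod.ringHom_surjective _) r
  have hdvd : C (d : ℤ) ∣ q - p * r := by
    refine (C_dvd_iff_dvd_coeff _ _).2 fun i => (ZMod.intCast_zmod_eq_zero_iff_dvd _ d).1 ?_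
    rw [← eq_intCast (Int.castRingHom (ZMod d)), ← coeff_map, Polynomial.map_sub,
      Polynomial.map_mul, hr, sub_self, coeff_zero]
  obtain ⟨s, hs⟩ := hdvd
  refine Ideal.mem_span_pair.2 ⟨aeval c s, aeval c r, ?_⟩
  rw [sub_eq_iff_eq_add.1 hs]
  simp [mul_comm]

lemma prod_span_pair_le (s : Finset ι) (D : R) (y : ι → R) :
    ∏ i ∈ s, Ideal.span {D, y i} ≤ Ideal.span {D, ∏ i ∈ s, y i} := by
  classical
  induction s using Finset.induction_on with
  | empty => simp [Ideal.span_insert]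
  | insert i s hi ih =>
    rw [Finset.prod_insert hi, Finset.prod_insert hi]
    refine (mul_le_mul_right ih _).trans ?_
    rw [Ideal.span_pair_mul_span_pair, Ideal.span_le]
    have hD : D ∈ Ideal.span {D, y i * ∏ j ∈ s, y j} := left_mem_span_pair _ _
    rintro z (rfl | rfl | rfl | rfl)
    exacts [Ideal.mul_mem_left _ _ hD, Ideal.mul_mem_right _ _ hD, Ideal.mul_mem_left _ _ hD,
      right_mem_span_pair _ _]

variable [Fintype ι] {x : R} {y : ι → R}

lemma span_pair_prod_aeval_eq {d : ℕ} {q : ℤ[X]} {p : ι → ℤ[X]} {c : R}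
    (h : q.map (Int.castRingHom (ZMod d)) = ∏ i, (p i).map (Int.castRingHom (ZMod d)))
    (hdvd : aeval c q ∣ (d : R)) :
    Ideal.span {(d : R), ∏ i, aeval c (p i)} = Ideal.span {aeval c q} := by
  rw [← Polynomial.map_prod] at h
  rw [← map_prod]
  refine le_antisymm ?_ ?_
  · have hmem := aeval_mem_span_pair_of_map_dvd h.dvd c
    rw [Ideal.span_pair_eq_span_right_iff_dvd.2 hdvd] at hmem
    rw [Ideal.span_le]
    rintro z (rfl | rfl)
    exacts [Ideal.mem_span_singleton.2 hdvd, hmem]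
  · exact (Ideal.span_singleton_le_iff_mem _).2 (aeval_mem_span_pair_of_map_dvd h.symm.dvd c)

lemma prod_span_pair_eq_span_singleton (hx : Ideal.span {D, ∏ i, y i} = Ideal.span {x})
    (hxD : x ^ 2 ∣ D) : ∏ i, Ideal.span {D, y i} = Ideal.span {x} := by
  refine le_antisymm ((prod_span_pair_le _ D y).trans_eq hx) ?_
  set I := ∏ i, Ideal.span {D, y i}
  have hD : D ^ Fintype.card ι ∈ I := by
    rw [← Finset.card_univ, ← Finset.prod_const]
    exact Ideal.prod_mem_prod fun _ _ => left_mem_span_pair _ _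
  have hy : ∏ i, y i ∈ I := Ideal.prod_mem_prod fun _ _ => right_mem_span_pair _ _
  obtain ⟨a, b, hab⟩ := Ideal.mem_span_pair.1 (hx ▸ Ideal.mem_span_singleton_self x)
  obtain ⟨e, rfl⟩ := hxD
  -- `x = aD + b∏y` reads `(1 - aex)x = b∏y`, and `1 - aex` is a unit modulo `I` because
  -- `(aex)² ∈ (D)`.
  have hnil : IsNilpotent (Ideal.Quotient.mk I (a * e * x)) := by
    refine ⟨2 * Fintype.card ι, ?_⟩
    rw [← map_pow, Ideal.Quotient.eq_zero_iff_mem, pow_mul,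
      show (a * e * x) ^ 2 = a ^ 2 * e * (x ^ 2 * e) by ring, mul_pow]
    exact I.mul_mem_left _ hD
  rw [Ideal.span_singleton_le_iff_mem, ← Ideal.Quotient.eq_zero_iff_mem]
  rw [← hnil.isUnit_one_sub.mul_right_eq_zero, ← map_one (Ideal.Quotient.mk I), ← map_sub,
    ← map_mul, Ideal.Quotient.eq_zero_iff_mem,
    show (1 - a * e * x) * x = b * ∏ i, y i by linear_combination -hab]
  exact I.mul_mem_left b hy

lemma prod_span_pair_eq_span_pair_of_forall_ne (i : ι)
    (h : ∀ j ≠ i, Ideal.span {D, y j} = ⊤) :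
    ∏ j, Ideal.span {D, y j} = Ideal.span {D, ∏ j, y j} := by
  refine le_antisymm (prod_span_pair_le _ D y) ?_
  rw [Fintype.prod_eq_single i fun j hj => (h j hj).trans Ideal.one_eq_top.symm, Ideal.span_le]
  rintro z (rfl | rfl)
  · exact left_mem_span_pair _ _
  · exact Ideal.mem_of_dvd _ (Finset.dvd_prod_of_mem y (Finset.mem_univ i))
      (right_mem_span_pair _ _)

lemma exists_forall_ne_isUnit_of_prime_prod {M : Type*} [CommMonoidWithZero M]
    [IsCancelMulZero M] {f : ι → M} (h : Prime (∏ i, f i)) : ∃ i, ∀ j ≠ i, IsUnit (f j) := by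
  classical
  obtain ⟨i, -, hi⟩ := h.exists_mem_finset_dvd dvd_rfl
  refine ⟨i, fun j hj => ?_⟩
  have hprod := Finset.mul_prod_erase Finset.univ f (Finset.mem_univ i)
  have hunit : IsUnit (∏ k ∈ Finset.univ.erase i, f k) := by
    have hfi : f i ≠ 0 := ne_zero_of_dvd_ne_zero h.ne_zero (hprod ▸ dvd_mul_right _ _)
    rw [← hprod] at hi
    exact isUnit_of_dvd_one ((mul_dvd_mul_iff_left hfi).1 (by rwa [mul_one]))
  exact isUnit_of_dvd_unit (Finset.dvd_prod_of_mem f (Finset.mem_erase.2 ⟨hj, Finset.mem_univ j⟩))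
    hunit

end SpanPair

section IdealFactorization

lemma two_le_misiurewiczExponent {d l n : ℕ} (hd : 2 ≤ d) (hl : 0 < l) (hn : 2 ≤ n) :
    2 ≤ misiurewiczExponent d (l + 1) n := by
  have hdl : d ≤ d ^ l := Nat.le_self_pow hl.ne' d
  rw [misiurewiczExponent, Nat.add_sub_cancel]
  split_ifs with hnl
  · obtain rfl | hd3 := hd.eq_or_lt
    · have := Nat.pow_le_pow_right two_pos (hn.trans (Nat.le_of_dvd hl hnl))
      omega
    · calc 2 ≤ d - 1 := Nat.le_sub_one_of_lt hd3
        _ ≤ (d ^ l - 1) * (d - 1) := Nat.le_mul_of_pos_left _ (by omega)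
  · exact hd.trans (hdl.trans (Nat.le_mul_of_pos_right _ (by omega)))

lemma misiurewiczExponent_ne_zero {d l n : ℕ} (hd : 2 ≤ d) (hl : 0 < l) :
    misiurewiczExponent d (l + 1) n ≠ 0 := by
  have hdl : d ≤ d ^ l := Nat.le_self_pow hl.ne' d
  rw [misiurewiczExponent, Nat.add_sub_cancel]
  split_ifs <;> exact Nat.mul_ne_zero (by omega) (by omega)

lemma IsG0.eq_X {d : ℕ} {G₀ : ℤ[X]} (hG₀ : IsG0 d 1 G₀) (hd : d ≠ 0) : G₀ = X := by
  refine IsFractionRing.injective ℤ[X] RF (hG₀.trans ?_)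
  simp [G0Rat, critPoly, toRF, hd]

variable {R : Type*} [CommRing R] {c : R} {d l n : ℕ} [Fact d.Prime] {G G₀ : ℤ[X]}

lemma IsG0.prod_span_aeval {ι : Type*} [Fintype ι] {ft : ι → ℤ[X]} (hG₀ : IsG0 d n G₀)
    (hfact : G₀.map (Int.castRingHom (ZMod d)) = ∏ i, (ft i).map (Int.castRingHom (ZMod d)))
    (hl : 0 < l) (hn : 0 < n)
    (hD : aeval c G₀ ^ misiurewiczExponent d (l + 1) n ∣ (d : R)) :
    ∏ i, Ideal.span {(d : R), aeval c (ft i)} = Ideal.span {aeval c G₀} := by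
  have hd : d.Prime := Fact.out
  have hspan := span_pair_prod_aeval_eq hfact
    ((dvd_pow_self _ (misiurewiczExponent_ne_zero hd.two_le hl)).trans hD)
  obtain rfl | hn2 := (Nat.succ_le_of_lt hn).eq_or_lt
  · have hX : Prime (∏ i, (ft i).map (Int.castRingHom (ZMod d))) := by
      rw [← hfact, hG₀.eq_X hd.ne_zero, map_X]
      exact prime_X
    obtain ⟨i, hi⟩ := exists_forall_ne_isUnit_of_prime_prod hX
    rw [← hspan]
    refine prod_span_pair_eq_span_pair_of_forall_ne i fun j hj => ?_
    rw [Ideal.eq_top_iff_one]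
    simpa using aeval_mem_span_pair_of_map_dvd (q := 1) (by simpa using (hi j hj).dvd) c
  · exact prod_span_pair_eq_span_singleton hspan
      ((pow_dvd_pow _ (two_le_misiurewiczExponent hd.two_le hl hn2)).trans hD)

variable [IsDomain R]

lemma IsG0.aeval_eq_zero (hG₀ : IsG0 d n G₀) (hc : IsCritPeriod d c n)
    (h : critOrbit d c n = 0) : aeval c G₀ = 0 := by
  obtain ⟨a, -, b, hb, hab⟩ := hG₀.exists_mul_eq hc.pos (S := nonvanishing c)
    (fun h0 => mem_nonvanishing.1 h0 (map_zero _)) fun k hk hnk => by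
      rw [mem_nonvanishing, map_critOrbit, aeval_X, ← orbitGap_zero_left]
      exact fun h0 => hnk ((hc.orbitGap_eq_zero_iff hk).1 h0).1
  have hmul := congrArg (aeval c) hab
  rw [map_mul, map_mul, map_critOrbit, aeval_X, h, zero_mul] at hmul
  exact (mul_eq_zero.1 hmul).resolve_right (mem_nonvanishing.1 hb)

lemma IsG0.associated_critOrbit (hG₀ : IsG0 d n G₀) (hc : IsMisiurewiczPoint d c l n) :
    Associated (aeval c G₀) (critOrbit d c n) := by
  have hd : d.Prime := Fact.out
  obtain ⟨a, ha, b, hb, hab⟩ := hG₀.exists_mul_eq hc.isCritPeriod.pos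
    (S := (IsUnit.submonoid R).comap (aeval (R := ℤ) c))
    (by simp [IsUnit.mem_submonoid_iff])
    fun k hk hnk => by
      rw [Submonoid.mem_comap, IsUnit.mem_submonoid_iff, map_critOrbit, aeval_X]
      exact hc.isUnit_critOrbit hd.two_le hk hnk
  have hmul := congrArg (aeval c) hab
  rw [map_mul, map_mul, map_critOrbit, aeval_X] at hmul
  exact (associated_mul_isUnit_left_iff hb).1 (hmul ▸ associated_mul_unit_left _ _ ha)

theorem IsMisiurewicz.associated_aeval_pow (hG : IsMisiurewicz d (l + 1) n G)
    (hG₀ : IsG0 d n G₀) (hdu : ¬IsUnit (d : R)) (hl : 0 < l) (hn : 0 < n)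
    (hroot : aeval c G = 0) :
    Associated (aeval c G₀ ^ misiurewiczExponent d (l + 1) n) (d : R) := by
  have hd : d.Prime := Fact.out
  by_cases hd0 : (d : R) = 0
  · obtain ⟨hc, hratio, -⟩ := hG.gapRatio_eq_zero hdu hl hn hroot
    have : CharP R d := (CharP.charP_iff_prime_eq_zero hd).2 hd0
    have hcn : critOrbit d c n ^ d ^ (l + 1) = 0 := by
      rw [← orbitGap_eq_pow_of_charP, orbitGap_succ, hratio, mul_zero]
    rw [hG₀.aeval_eq_zero hc (eq_zero_of_pow_eq_zero hcn), hd0,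
      zero_pow (misiurewiczExponent_ne_zero hd.two_le hl)]
  · have hc := hG.isMisiurewiczPoint hd0 hdu hl hn hroot
    exact ((hG₀.associated_critOrbit hc).pow_pow).trans
      (hc.associated_pow_misiurewiczExponent hd hl)

end IdealFactorization

theorem span_d_ideal_factorization_general (d m n : ℕ) [Fact d.Prime] (hm : 2 ≤ m)
    (hn : 1 ≤ n) (G G0 : ℤ[X]) (hG : IsMisiurewicz d m n G) (hG0 : IsG0 d n G0)
    {ι : Type*} [Fintype ι] (ft : ι → ℤ[X])
    (hfact : G0.map (Int.castRingHom (ZMod d)) = ∏ i, (ft i).map (Int.castRingHom (ZMod d)))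
    {R : Type*} [CommRing R] [IsDomain R] (c : R) (hroot : aeval c G = 0) :
    Ideal.span {(d : R)} =
      ∏ i, Ideal.span {(d : R), aeval c (ft i)} ^ misiurewiczExponent d m n := by
  obtain ⟨l, rfl⟩ : ∃ l, m = l + 1 := Nat.exists_eq_add_of_le' (one_le_two.trans hm)
  have hl : 0 < l := by omega
  by_cases hdu : IsUnit (d : R)
  · have htop : ∀ i, Ideal.span {(d : R), aeval c (ft i)} = ⊤ := fun i =>
      Ideal.eq_top_of_isUnit_mem _ (left_mem_span_pair _ _) hdu
    simp [htop, Ideal.span_singleton_eq_top.2 hdu, ← Ideal.one_eq_top]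
  have hD := hG.associated_aeval_pow hG0 hdu hl hn hroot
  rw [Finset.prod_pow, hG0.prod_span_aeval hfact hl hn hD.dvd,
    Ideal.span_singleton_pow, Ideal.span_singleton_eq_span_singleton]
  exact hD.symm

/-- Let `d` be a prime, `m ≥ 2`, `n ≥ 1`. Suppose the reduction of
`G_{d,0,n}` modulo `d` factors as `f_1 ⋯ f_k` with the `f_i ∈ 𝔽_d[c]` distinct irreducible,
and let `f̃_i ∈ ℤ[c]` be any lifts. If `c₀` is a root of `G_{d,m,n}` and `K = ℚ(c₀)`, then
`(d) = (d, f̃_1(c₀))^{M_{m,n}} ⋯ (d, f̃_k(c₀))^{M_{m,n}}` in `O_K`, where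
`M_{m,n} = d^{m-1}(d-1)` if `n ∤ m-1` and `M_{m,n} = (d^{m-1}-1)(d-1)` if `n ∣ m-1`. -/
theorem span_d_ideal_factorization (d m n : ℕ) [hd : Fact d.Prime] (hm : 2 ≤ m) (hn : 1 ≤ n)
    (G G0 : Polynomial ℤ) (hG : IsMisiurewicz d m n G) (hG0 : IsG0 d n G0)
    (k : ℕ) (f : Fin k → Polynomial (ZMod d))
    (hfirr : ∀ i, Irreducible (f i)) (hfdist : Function.Injective f)
    (hfact : G0.map (Int.castRingHom (ZMod d)) = ∏ i, f i)
    (ft : Fin k → Polynomial ℤ) (hlift : ∀ i, (ft i).map (Int.castRingHom (ZMod d)) = f i)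
    (K : Type*) [Field K] [NumberField K] (c₀ : NumberField.RingOfIntegers K)
    (hroot : Polynomial.aeval (c₀ : K) G = 0)
    (hgen : Algebra.adjoin ℚ {(c₀ : K)} = ⊤) :
    Ideal.span {(d : NumberField.RingOfIntegers K)} =
      ∏ i, Ideal.span {(d : NumberField.RingOfIntegers K), Polynomial.aeval c₀ (ft i)} ^
        (if n ∣ m - 1 then (d ^ (m - 1) - 1) * (d - 1) else d ^ (m - 1) * (d - 1)) := by
  have hroot' : aeval c₀ G = 0 :=
    NumberField.RingOfIntegers.coe_injective (by rwa [map_zero, ← aeval_algebraMap_apply])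
  exact span_d_ideal_factorization_general d m n hm hn G G0 hG hG0 ft (by simp only [hfact, hlift])
    c₀ hroot'
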